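/- (Inversion formula (2).) Assume ∫_{|x|>1} x² U(dx) < ∞, and let −∞ < a < b < ∞ with U({a}) = U({b}) = 0. Then ∫_{[a,b]} x² U(dx) = −(1/(2π)) · lim_{R→∞} ∫_{−R}^{R} (ψ''(z) + σ²) · (∫_a^b e^{−izx} dx) dz. -/

import Mathlib

open MeasureTheory Filter Asymptotics

/-!
Write `ν = x² U`, a finite measure with characteristic function `φ`. Differentiating the cumulant
function twice under the integral sign gives `ψ'' = -σ² - φ`, so the claim is an instance of
Lévy's inversion theorem. There, `φ(z) ∫_a^b e^{-izy} dy` is the characteristic function of the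
convolution of `ν` with the reflected Lebesgue measure on `[a, b]`; its integral over `[-R, R]` is
`2 ∫ (Si (R (x - a)) - Si (R (x - b))) dν(x)`. Since `Si` is bounded and tends to `π / 2`
(Dirichlet's integral), dominated convergence yields the limit
`π ∫ (sign (x - a) - sign (x - b)) dν(x) = π (ν [a, b] + ν (a, b))`.
-/

section SineIntegral

open Real Set Topology

/-- The sine integral `Si t = ∫₀ᵗ sin x / x dx`. -/
noncomputable def sineIntegral (t : ℝ) : ℝ := ∫ x in (0 : ℝ)..t, sinc x

lemma sinc_mul_self (x : ℝ) : sinc x * x = sin x := by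
  rcases eq_or_ne x 0 with rfl | hx
  · simp
  · rw [sinc_of_ne_zero hx, div_mul_cancel₀ _ hx]

@[fun_prop]
lemma continuous_sineIntegral : Continuous sineIntegral :=
  intervalIntegral.continuous_primitive (fun _ _ ↦ continuous_sinc.intervalIntegrable _ _) 0

lemma sineIntegral_neg (t : ℝ) : sineIntegral (-t) = -sineIntegral t := by
  have h := intervalIntegral.integral_comp_neg (a := 0) (b := t) sinc
  simp only [sinc_neg, neg_zero] at h
  rw [sineIntegral, sineIntegral, h, ← intervalIntegral.integral_symm]

lemma integral_sinc_eq_sineIntegral_sub (a b : ℝ) :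
    ∫ x in a..b, sinc x = sineIntegral b - sineIntegral a :=
  (intervalIntegral.integral_interval_sub_left (continuous_sinc.intervalIntegrable _ _)
    (continuous_sinc.intervalIntegrable _ _)).symm

lemma integral_exp_neg_mul_le {t : ℝ} (ht : 0 < t) : ∫ x in (0 : ℝ)..t, exp (-(x * t)) ≤ 1 / t := by
  have hderiv (x : ℝ) : HasDerivAt (fun x ↦ -exp (-(x * t)) / t) (exp (-(x * t))) x := by
    refine ((hasDerivAt_mul_const t).neg.exp.neg.div_const t).congr_deriv ?_
    simp only [Pi.neg_apply]
    field_simp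
  rw [intervalIntegral.integral_eq_sub_of_hasDerivAt (fun x _ ↦ hderiv x)
    (Continuous.intervalIntegrable (by fun_prop) _ _), ← sub_div, zero_mul, neg_zero, exp_zero]
  gcongr
  linarith [exp_pos (-(t * t))]

lemma integral_sin_mul_exp_neg_mul_right (t x : ℝ) :
    ∫ s in (0 : ℝ)..t, sin x * exp (-(x * s)) = sinc x - sinc x * exp (-(x * t)) := by
  have hderiv (s : ℝ) :
      HasDerivAt (fun s ↦ -(sinc x * exp (-(x * s)))) (sin x * exp (-(x * s))) s := by
    refine (((hasDerivAt_const_mul x).neg.exp).const_mul (sinc x)).neg.congr_deriv ?_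
    rw [← sinc_mul_self]
    simp only [Pi.neg_apply]
    ring
  rw [intervalIntegral.integral_eq_sub_of_hasDerivAt (fun s _ ↦ hderiv s)
    (Continuous.intervalIntegrable (by fun_prop) _ _), mul_zero, neg_zero, exp_zero]
  ring

lemma integral_sin_mul_exp_neg_mul_left (t s : ℝ) :
    ∫ x in (0 : ℝ)..t, sin x * exp (-(x * s)) =
      1 / (1 + s ^ 2) - exp (-(s * t)) * (cos t + s * sin t) / (1 + s ^ 2) := by
  have hderiv (x : ℝ) :
      HasDerivAt (fun x ↦ -(exp (-(x * s)) * (cos x + s * sin x) / (1 + s ^ 2)))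
        (sin x * exp (-(x * s))) x := by
    refine (((hasDerivAt_mul_const s).neg.exp.mul ((hasDerivAt_cos x).add
      ((hasDerivAt_sin x).const_mul s))).div_const (1 + s ^ 2)).neg.congr_deriv ?_
    simp only [Pi.neg_apply, Pi.add_apply]
    field_simp
    ring
  rw [intervalIntegral.integral_eq_sub_of_hasDerivAt (fun x _ ↦ hderiv x)
    (Continuous.intervalIntegrable (by fun_prop) _ _), mul_comm s t, zero_mul, neg_zero, exp_zero,
    cos_zero, sin_zero]
  ring

lemma sineIntegral_sub_arctan (t : ℝ) :
    sineIntegral t - arctan t = (∫ x in (0 : ℝ)..t, sinc x * exp (-(x * t))) -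
      ∫ s in (0 : ℝ)..t, exp (-(s * t)) * (cos t + s * sin t) / (1 + s ^ 2) := by
  -- Integrating `sin x * exp (-(x * s))` over the square `[0, t]²` in both orders.
  have hswap : ∫ x in (0 : ℝ)..t, ∫ s in (0 : ℝ)..t, sin x * exp (-(x * s)) =
      ∫ s in (0 : ℝ)..t, ∫ x in (0 : ℝ)..t, sin x * exp (-(x * s)) := by
    have hcont : Continuous (Function.uncurry fun x s : ℝ ↦ sin x * exp (-(x * s))) := by
      fun_prop
    exact intervalIntegral_intervalIntegral_swap
      ((hcont.continuousOn.integrableOn_compact (isCompact_uIcc.prod isCompact_uIcc)).mono_set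
        (prod_mono uIoc_subset_uIcc uIoc_subset_uIcc))
  have hpos (s : ℝ) : 1 + s ^ 2 ≠ 0 := by positivity
  simp_rw [integral_sin_mul_exp_neg_mul_right, integral_sin_mul_exp_neg_mul_left] at hswap
  rw [intervalIntegral.integral_sub (Continuous.intervalIntegrable (by fun_prop) _ _)
      (Continuous.intervalIntegrable (by fun_prop) _ _),
    intervalIntegral.integral_sub
      (Continuous.intervalIntegrable (by fun_prop (disch := exact hpos)) _ _)
      (Continuous.intervalIntegrable (by fun_prop (disch := exact hpos)) _ _),
    integral_one_div_one_add_sq, arctan_zero, sub_zero] at hswap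
  rw [sineIntegral]
  linarith

lemma abs_cos_add_mul_sin_le (s t : ℝ) : |cos t + s * sin t| ≤ 1 + s ^ 2 := by
  have hsq : (cos t + s * sin t) ^ 2 ≤ 1 + s ^ 2 := by
    nlinarith [sin_sq_add_cos_sq t, sq_nonneg (sin t - s * cos t)]
  exact abs_le_of_sq_le_sq (by nlinarith [sq_nonneg s]) (by positivity)

lemma abs_integral_mul_exp_neg_mul_le {f : ℝ → ℝ} (hf : ∀ x, |f x| ≤ 1) {t : ℝ} (ht : 0 < t) :
    |∫ x in (0 : ℝ)..t, f x * exp (-(x * t))| ≤ 1 / t := by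
  have hbound (x : ℝ) : ‖f x * exp (-(x * t))‖ ≤ exp (-(x * t)) := by
    rw [norm_mul, norm_of_nonneg (exp_nonneg _)]
    exact mul_le_of_le_one_left (exp_nonneg _) (hf x)
  exact (intervalIntegral.norm_integral_le_of_norm_le ht.le (ae_of_all _ fun x _ ↦ hbound x)
    (Continuous.intervalIntegrable (by fun_prop) _ _)).trans (integral_exp_neg_mul_le ht)

lemma abs_sineIntegral_sub_arctan_le {t : ℝ} (ht : 0 < t) :
    |sineIntegral t - arctan t| ≤ 2 / t := by
  have hfst := abs_integral_mul_exp_neg_mul_le abs_sinc_le_one ht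
  have hsnd := abs_integral_mul_exp_neg_mul_le (f := fun s ↦ (cos t + s * sin t) / (1 + s ^ 2))
    (fun s ↦ by
      rw [abs_div, abs_of_pos (by positivity : 0 < 1 + s ^ 2)]
      exact div_le_one_of_le₀ (abs_cos_add_mul_sin_le s t) (by positivity)) ht
  simp_rw [div_mul_eq_mul_div, mul_comm (cos t + _) (exp _)] at hsnd
  rw [sineIntegral_sub_arctan]
  calc _ ≤ _ := abs_sub _ _
    _ ≤ 1 / t + 1 / t := add_le_add hfst hsnd
    _ = 2 / t := by ring

lemma tendsto_sineIntegral_atTop : Tendsto sineIntegral atTop (𝓝 (π / 2)) := by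
  have hdiff : Tendsto (fun t ↦ sineIntegral t - arctan t) atTop (𝓝 0) :=
    squeeze_zero_norm'
      ((eventually_gt_atTop 0).mono fun _ ht ↦ abs_sineIntegral_sub_arctan_le ht)
      (tendsto_const_nhds.div_atTop tendsto_id)
  simpa using hdiff.add (tendsto_nhds_of_tendsto_nhdsWithin tendsto_arctan_atTop)

lemma abs_sineIntegral_le (t : ℝ) : |sineIntegral t| ≤ 4 := by
  wlog ht : 0 ≤ t generalizing t
  · simpa [sineIntegral_neg] using this (-t) (by linarith)
  rcases le_total t 1 with ht1 | ht1
  · have h := intervalIntegral.norm_integral_le_of_norm_le_const (a := 0) (b := t) (f := sinc)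
      fun x _ ↦ abs_sinc_le_one x
    rw [norm_eq_abs, sub_zero, abs_of_nonneg ht, one_mul] at h
    exact h.trans (by linarith)
  · have hdiff : |sineIntegral t - arctan t| ≤ 2 :=
      (abs_sineIntegral_sub_arctan_le (by linarith)).trans (div_le_self (by norm_num) ht1)
    have harctan : |arctan t| ≤ 2 :=
      abs_le.mpr ⟨by linarith [neg_pi_div_two_lt_arctan t, pi_lt_four],
        by linarith [arctan_lt_pi_div_two t, pi_lt_four]⟩
    calc |sineIntegral t| = |(sineIntegral t - arctan t) + arctan t| := by rw [sub_add_cancel]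
      _ ≤ 2 + 2 := (abs_add_le _ _).trans (add_le_add hdiff harctan)
      _ = 4 := by norm_num

lemma tendsto_sineIntegral_mul_atTop (u : ℝ) :
    Tendsto (fun R ↦ sineIntegral (R * u)) atTop (𝓝 (π / 2 * sign u)) := by
  rcases lt_trichotomy u 0 with hu | rfl | hu
  · have h := (tendsto_sineIntegral_atTop.comp (tendsto_id.atTop_mul_const (neg_pos.mpr hu))).neg
    simpa [Function.comp_def, sineIntegral_neg, sign_of_neg hu] using h
  · simp [sineIntegral]
  · simpa [Function.comp_def, sign_of_pos hu] using
      tendsto_sineIntegral_atTop.comp (tendsto_id.atTop_mul_const hu)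

end SineIntegral

section LevyInversion

open Real Set Topology
open Complex (I)

lemma sign_sub_sub_sign_sub {a b : ℝ} (hab : a < b) (x : ℝ) :
    sign (x - a) - sign (x - b) = (Icc a b).indicator 1 x + (Ioo a b).indicator 1 x := by
  rcases lt_trichotomy x a with hxa | rfl | hxa
  · simp [sign_of_neg (sub_neg.mpr hxa), sign_of_neg (sub_neg.mpr (hxa.trans hab)), hxa.not_ge,
      hxa.not_gt]
  · simp [sign_of_neg (sub_neg.mpr hab), hab.le]
  · rcases lt_trichotomy x b with hxb | rfl | hxb
    · simp [sign_of_pos (sub_pos.mpr hxa), sign_of_neg (sub_neg.mpr hxb), hxa, hxb, hxa.le, hxb.le]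
    · simp [sign_of_pos (sub_pos.mpr hxa), hxa.le]
    · simp [sign_of_pos (sub_pos.mpr hxa), sign_of_pos (sub_pos.mpr hxb), hxb.not_ge, hxb.not_gt]

lemma charFun_restrict_Ioc_neg {a b : ℝ} (hab : a ≤ b) (z : ℝ) :
    charFun (volume.restrict (Ioc a b)) (-z) = ∫ y in a..b, Complex.exp (-(I * z * y)) := by
  rw [charFun_apply_real, intervalIntegral.integral_of_le hab]
  refine integral_congr_ae (ae_of_all _ fun y ↦ ?_)
  push_cast
  ring_nf

lemma mul_integral_sinc_mul_sub (R x a b : ℝ) :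
    R * ∫ y in a..b, sinc (R * (x - y)) =
      sineIntegral (R * (x - a)) - sineIntegral (R * (x - b)) := by
  rw [intervalIntegral.integral_comp_sub_left (fun v ↦ sinc (R * v)),
    intervalIntegral.mul_integral_comp_mul_left, integral_sinc_eq_sineIntegral_sub]

variable (ν : Measure ℝ) [IsFiniteMeasure ν] {a b : ℝ}

lemma integral_charFun_mul_integral_exp {R : ℝ} (hR : 0 < R) (hab : a ≤ b) :
    ∫ z in (-R)..R, charFun ν z * ∫ y in a..b, Complex.exp (-(I * z * y)) =
      ((2 * ∫ x, (sineIntegral (R * (x - a)) - sineIntegral (R * (x - b))) ∂ν : ℝ) : ℂ) := by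
  let reflected : Measure ℝ := (volume.restrict (Ioc a b)).map (-1 * ·)
  have hchar (z : ℝ) : charFun ν z * ∫ y in a..b, Complex.exp (-(I * z * y)) =
      charFun (ν ∗ reflected) z := by
    rw [charFun_conv, charFun_map_mul, neg_one_mul, charFun_restrict_Ioc_neg hab]
  have hsinc : Integrable (fun x ↦ sinc (R * x)) (ν ∗ reflected) :=
    .of_bound (by fun_prop) 1 (ae_of_all _ fun x ↦ abs_sinc_le_one _)
  have hconv : ∫ x, sinc (R * x) ∂(ν ∗ reflected) = ∫ x, (∫ y in a..b, sinc (R * (x - y))) ∂ν := by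
    rw [integral_conv hsinc]
    refine integral_congr_ae (ae_of_all _ fun x ↦ ?_)
    simp only [reflected]
    rw [integral_map (by fun_prop) (by fun_prop), ← intervalIntegral.integral_of_le hab]
    simp only [neg_one_mul, ← sub_eq_add_neg]
  simp_rw [hchar, ← mul_integral_sinc_mul_sub]
  rw [integral_charFun_Icc hR, hconv, integral_const_mul]
  push_cast
  ring

theorem tendsto_integral_charFun_mul_integral_exp (hab : a < b) :
    Tendsto (fun R : ℝ ↦ ∫ z in (-R)..R, charFun ν z * ∫ y in a..b, Complex.exp (-(I * z * y)))
      atTop (𝓝 ((π * (ν.real (Icc a b) + ν.real (Ioo a b)) : ℝ) : ℂ)) := by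
  have hlim (x : ℝ) : Tendsto
      (fun R ↦ sineIntegral (R * (x - a)) - sineIntegral (R * (x - b))) atTop
      (𝓝 (π / 2 * ((Icc a b).indicator 1 x + (Ioo a b).indicator 1 x))) := by
    rw [← sign_sub_sub_sign_sub hab, mul_sub]
    exact (tendsto_sineIntegral_mul_atTop _).sub (tendsto_sineIntegral_mul_atTop _)
  have hdom : Tendsto
      (fun R ↦ ∫ x, (sineIntegral (R * (x - a)) - sineIntegral (R * (x - b))) ∂ν) atTop
      (𝓝 (∫ x, π / 2 * ((Icc a b).indicator 1 x + (Ioo a b).indicator 1 x) ∂ν)) := by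
    refine tendsto_integral_filter_of_dominated_convergence (fun _ ↦ 4 + 4)
      (.of_forall fun R ↦ Continuous.aestronglyMeasurable (by fun_prop))
      (.of_forall fun R ↦ ae_of_all _ fun x ↦ ?_) (integrable_const _) (ae_of_all _ hlim)
    exact (abs_sub _ _).trans (add_le_add (abs_sineIntegral_le _) (abs_sineIntegral_le _))
  have hvalue : 2 * ∫ x, π / 2 * ((Icc a b).indicator 1 x + (Ioo a b).indicator 1 x) ∂ν =
      π * (ν.real (Icc a b) + ν.real (Ioo a b)) := by
    rw [integral_const_mul, integral_add ((integrable_const 1).indicator measurableSet_Icc)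
      ((integrable_const 1).indicator measurableSet_Ioo), integral_indicator_one measurableSet_Icc,
      integral_indicator_one measurableSet_Ioo]
    ring
  rw [← hvalue]
  refine (Complex.continuous_ofReal.tendsto _).comp (hdom.const_mul 2) |>.congr' ?_
  filter_upwards [eventually_gt_atTop 0] with R hR
  exact (integral_charFun_mul_integral_exp ν hR hab.le).symm

end LevyInversion

section SecondMomentMeasure

open Complex (I)

/-- The measure `x² U(dx)`, which turns the second derivative of a cumulant function into a
characteristic function. -/
noncomputable def secondMomentMeasure (U : Measure ℝ) : Measure ℝ :=
  U.withDensity fun x ↦ ENNReal.ofReal (x ^ 2)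

variable {U : Measure ℝ}

lemma isFiniteMeasure_secondMomentMeasure (hU : Integrable (fun x ↦ x ^ 2) U) :
    IsFiniteMeasure (secondMomentMeasure U) :=
  isFiniteMeasure_withDensity_ofReal hU.hasFiniteIntegral

lemma secondMomentMeasure_real_apply {s : Set ℝ} (hs : MeasurableSet s) :
    (secondMomentMeasure U).real s = ∫ x in s, x ^ 2 ∂U := by
  rw [integral_eq_lintegral_of_nonneg_ae (ae_of_all _ fun x ↦ sq_nonneg x) (by fun_prop),
    measureReal_def, secondMomentMeasure, withDensity_apply _ hs]

lemma charFun_secondMomentMeasure (z : ℝ) :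
    charFun (secondMomentMeasure U) z = ∫ x : ℝ, (x : ℂ) ^ 2 * Complex.exp (I * z * x) ∂U := by
  rw [charFun_apply_real, secondMomentMeasure, integral_withDensity_eq_integral_toReal_smul
    (by fun_prop) (ae_of_all _ fun x ↦ ENNReal.ofReal_lt_top)]
  refine integral_congr_ae (ae_of_all _ fun x ↦ ?_)
  simp only [ENNReal.toReal_ofReal (sq_nonneg x), Complex.real_smul, Complex.ofReal_pow]
  ring_nf

end SecondMomentMeasure

section CompensatedExponential

open Complex (I)

lemma hasDerivAt_cexp_I_mul_mul (z x : ℝ) :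
    HasDerivAt (fun z : ℝ ↦ Complex.exp (I * z * x)) (I * x * Complex.exp (I * z * x)) z := by
  refine (((hasDerivAt_id z).ofReal_comp.const_mul I).mul_const (x : ℂ)).cexp.congr_deriv ?_
  simp only [id, Complex.ofReal_one]
  ring

lemma hasDerivAt_cexp_I_mul_mul_sub_one_sub (z x : ℝ) :
    HasDerivAt (fun z : ℝ ↦ Complex.exp (I * z * x) - 1 - I * z * x)
      (I * x * (Complex.exp (I * z * x) - 1)) z := by
  refine (((hasDerivAt_cexp_I_mul_mul z x).sub_const 1).sub
    (((hasDerivAt_id z).ofReal_comp.const_mul I).mul_const (x : ℂ))).congr_deriv ?_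
  simp only [Complex.ofReal_one]
  ring

lemma norm_I_mul_mul_cexp_sub_one_le (z x : ℝ) :
    ‖I * x * (Complex.exp (I * z * x) - 1)‖ ≤ |z| * x ^ 2 := by
  have hexp : ‖Complex.exp (I * z * x) - 1‖ ≤ |z * x| := by
    simpa [mul_assoc] using Real.norm_exp_I_mul_ofReal_sub_one_le (x := z * x)
  calc ‖I * x * (Complex.exp (I * z * x) - 1)‖
      = |x| * ‖Complex.exp (I * z * x) - 1‖ := by simp
    _ ≤ |x| * |z * x| := by gcongr
    _ = |z| * x ^ 2 := by rw [abs_mul, ← sq_abs x]; ring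

lemma norm_cexp_I_mul_mul_sub_one_sub_le (z x : ℝ) :
    ‖Complex.exp (I * z * x) - 1 - I * z * x‖ ≤ z ^ 2 * x ^ 2 := by
  have hmean := (convex_closedBall (0 : ℝ) |z|).norm_image_sub_le_of_norm_hasDerivWithin_le
    (C := |z| * x ^ 2) (x := 0) (y := z)
    (fun w _ ↦ (hasDerivAt_cexp_I_mul_mul_sub_one_sub w x).hasDerivWithinAt)
    (fun w hw ↦ (norm_I_mul_mul_cexp_sub_one_le w x).trans <| by
      have : |w| ≤ |z| := by simpa using hw
      gcongr)
    (by simp) (by simp)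
  simp only [Complex.ofReal_zero, mul_zero, zero_mul, Complex.exp_zero, sub_self, sub_zero,
    Real.norm_eq_abs] at hmean
  exact hmean.trans_eq (by rw [← sq_abs z]; ring)

variable {U : Measure ℝ}

lemma integrable_cexp_I_mul_mul_sub_one_sub (hU : Integrable (fun x ↦ x ^ 2) U) (z : ℝ) :
    Integrable (fun x : ℝ ↦ Complex.exp (I * z * x) - 1 - I * z * x) U :=
  (hU.const_mul (z ^ 2)).mono' (by fun_prop)
    (ae_of_all _ fun x ↦ norm_cexp_I_mul_mul_sub_one_sub_le z x)

lemma integrable_I_mul_mul_cexp_sub_one (hU : Integrable (fun x ↦ x ^ 2) U) (z : ℝ) :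
    Integrable (fun x : ℝ ↦ I * x * (Complex.exp (I * z * x) - 1)) U :=
  (hU.const_mul |z|).mono' (by fun_prop) (ae_of_all _ fun x ↦ norm_I_mul_mul_cexp_sub_one_le z x)

lemma hasDerivAt_integral_cexp_sub_one_sub (hU : Integrable (fun x ↦ x ^ 2) U) (z : ℝ) :
    HasDerivAt (fun z : ℝ ↦ ∫ x : ℝ, (Complex.exp (I * z * x) - 1 - I * z * x) ∂U)
      (∫ x : ℝ, I * x * (Complex.exp (I * z * x) - 1) ∂U) z := by
  have hbound (x w : ℝ) (hw : w ∈ Metric.ball z 1) :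
      ‖I * x * (Complex.exp (I * w * x) - 1)‖ ≤ (|z| + 1) * x ^ 2 := by
    have hwz : |w| ≤ |z| + 1 := by
      have : |w - z| < 1 := hw
      linarith [abs_sub_abs_le_abs_sub w z]
    exact (norm_I_mul_mul_cexp_sub_one_le w x).trans (by gcongr)
  exact (hasDerivAt_integral_of_dominated_loc_of_deriv_le (Metric.ball_mem_nhds z zero_lt_one)
    (.of_forall fun w ↦ by fun_prop) (integrable_cexp_I_mul_mul_sub_one_sub hU z) (by fun_prop)
    (ae_of_all _ hbound) (hU.const_mul _)
    (ae_of_all _ fun x w _ ↦ hasDerivAt_cexp_I_mul_mul_sub_one_sub w x)).2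

lemma hasDerivAt_integral_I_mul_mul_cexp_sub_one (hU : Integrable (fun x ↦ x ^ 2) U) (z : ℝ) :
    HasDerivAt (fun z : ℝ ↦ ∫ x : ℝ, I * x * (Complex.exp (I * z * x) - 1) ∂U)
      (-charFun (secondMomentMeasure U) z) z := by
  have hderiv (x w : ℝ) : HasDerivAt (fun w : ℝ ↦ I * x * (Complex.exp (I * w * x) - 1))
      (-((x : ℂ) ^ 2 * Complex.exp (I * w * x))) w := by
    refine (((hasDerivAt_cexp_I_mul_mul w x).sub_const 1).const_mul (I * x)).congr_deriv ?_
    linear_combination (x : ℂ) ^ 2 * Complex.exp (I * w * x) * Complex.I_sq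
  have hbound (x w : ℝ) : ‖-((x : ℂ) ^ 2 * Complex.exp (I * w * x))‖ ≤ x ^ 2 := by
    simp [Complex.norm_exp]
  rw [charFun_secondMomentMeasure, ← integral_neg]
  exact (hasDerivAt_integral_of_dominated_loc_of_deriv_le univ_mem
    (.of_forall fun w ↦ by fun_prop) (integrable_I_mul_mul_cexp_sub_one hU z) (by fun_prop)
    (ae_of_all _ fun x w _ ↦ hbound x w) hU (ae_of_all _ fun x w _ ↦ hderiv x w)).2

end CompensatedExponential

section CumulantFunction

open Complex (I)

/-- The Lévy–Khintchine cumulant function with Lévy measure `U`, truncation function `h`, drift `γ`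
and Gaussian variance `σ ^ 2`. The integral has the junk value `0` where its integrand is not
`U`-integrable. -/
noncomputable def cumulantFunction (U : Measure ℝ) (h : ℝ → ℝ) (γ σ z : ℝ) : ℂ :=
  I * γ * z - σ ^ 2 * z ^ 2 / 2 + ∫ x : ℝ, (Complex.exp (I * z * x) - 1 - I * z * x * h x) ∂U

variable {U : Measure ℝ} {h : ℝ → ℝ}

lemma cumulantFunction_eq_cumulantFunction_one (hU : Integrable (fun x ↦ x ^ 2) U)
    (hh : Integrable (fun x ↦ x * (1 - h x)) U) (γ σ : ℝ) :
    cumulantFunction U h γ σ = cumulantFunction U 1 (γ + ∫ x, x * (1 - h x) ∂U) σ := by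
  ext z
  have hsplit : ∫ x : ℝ, (Complex.exp (I * z * x) - 1 - I * z * x * h x) ∂U =
      (∫ x : ℝ, (Complex.exp (I * z * x) - 1 - I * z * x) ∂U) +
        I * z * (∫ x, x * (1 - h x) ∂U : ℝ) := by
    have hdrift : Integrable (fun x ↦ I * z * (x * (1 - h x) : ℝ)) U := hh.ofReal.const_mul _
    rw [← integral_complex_ofReal, ← integral_const_mul,
      ← integral_add (integrable_cexp_I_mul_mul_sub_one_sub hU z) hdrift]
    congr with x
    push_cast
    ring
  simp only [cumulantFunction, hsplit, Pi.one_apply, Complex.ofReal_one, mul_one,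
    Complex.ofReal_add]
  ring

lemma hasDerivAt_cumulantFunction_one (hU : Integrable (fun x ↦ x ^ 2) U) (γ σ z : ℝ) :
    HasDerivAt (cumulantFunction U 1 γ σ)
      (I * γ - σ ^ 2 * z + ∫ x : ℝ, I * x * (Complex.exp (I * z * x) - 1) ∂U) z := by
  have hlinear : HasDerivAt (fun z : ℝ ↦ I * γ * z) (I * γ) z := by
    simpa using (hasDerivAt_id z).ofReal_comp.const_mul (I * γ)
  have hquadratic : HasDerivAt (fun z : ℝ ↦ (σ ^ 2 * z ^ 2 / 2 : ℂ)) (σ ^ 2 * z) z := by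
    refine ((((hasDerivAt_id z).ofReal_comp.pow 2).const_mul _).div_const 2).congr_deriv ?_
    simp only [id, Nat.cast_ofNat, Complex.ofReal_one]
    ring
  have hformula : cumulantFunction U 1 γ σ = fun z : ℝ ↦ (I * γ * z - σ ^ 2 * z ^ 2 / 2 : ℂ) +
      ∫ x : ℝ, (Complex.exp (I * z * x) - 1 - I * z * x) ∂U := by
    ext z
    simp only [cumulantFunction, Pi.one_apply, Complex.ofReal_one, mul_one]
  rw [hformula]
  exact (hlinear.sub hquadratic).add (hasDerivAt_integral_cexp_sub_one_sub hU z)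

lemma hasDerivAt_deriv_cumulantFunction (hU : Integrable (fun x ↦ x ^ 2) U)
    (hh : Integrable (fun x ↦ x * (1 - h x)) U) (γ σ z : ℝ) :
    HasDerivAt (deriv (cumulantFunction U h γ σ))
      (-σ ^ 2 - charFun (secondMomentMeasure U) z) z := by
  have hderiv := funext fun z ↦
    (hasDerivAt_cumulantFunction_one hU (γ + ∫ x, x * (1 - h x) ∂U) σ z).deriv
  rw [cumulantFunction_eq_cumulantFunction_one hU hh, hderiv]
  have hlinear : HasDerivAt (fun z : ℝ ↦ (σ : ℂ) ^ 2 * z) (σ ^ 2) z := by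
    simpa using (hasDerivAt_id z).ofReal_comp.const_mul ((σ : ℂ) ^ 2)
  exact (hlinear.const_sub _).add (hasDerivAt_integral_I_mul_mul_cexp_sub_one hU z)

end CumulantFunction

section LevyMeasure

open Topology

variable {U : Measure ℝ}

lemma integrable_sq_of_lintegral_lt_top (hU : ∫⁻ x, ENNReal.ofReal (min 1 (x ^ 2)) ∂U < ⊤)
    (hU2 : ∫⁻ x in {x : ℝ | 1 < |x|}, ENNReal.ofReal (x ^ 2) ∂U < ⊤) :
    Integrable (fun x ↦ x ^ 2) U := by
  have hmeas : MeasurableSet {x : ℝ | 1 < |x|} := measurableSet_lt (by fun_prop) (by fun_prop)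
  have hcompl : ∫⁻ x in {x : ℝ | 1 < |x|}ᶜ, ENNReal.ofReal (x ^ 2) ∂U < ⊤ := by
    refine ((setLIntegral_mono' hmeas.compl fun x hx ↦ ?_).trans
      (setLIntegral_le_lintegral _ _)).trans_lt hU
    have hx1 : |x| ≤ 1 := not_lt.mp hx
    rw [min_eq_right ((sq_le_one_iff_abs_le_one x).mpr hx1)]
  refine (lintegral_ofReal_ne_top_iff_integrable (by fun_prop)
    (ae_of_all _ fun x ↦ sq_nonneg x)).mp ?_
  rw [← lintegral_add_compl _ hmeas]
  exact (ENNReal.add_lt_top.mpr ⟨hU2, hcompl⟩).ne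

variable {h : ℝ → ℝ}

lemma exists_abs_mul_one_sub_le_mul_sq (hsmall : (fun x ↦ h x - 1) =O[𝓝 0] fun x ↦ x)
    (hxh : ∃ C, ∀ x, |x * h x| ≤ C) : ∃ C, ∀ x, |x * (1 - h x)| ≤ C * x ^ 2 := by
  obtain ⟨B, hB⟩ := hsmall.bound
  obtain ⟨δ, hδ, hnear⟩ := Metric.eventually_nhds_iff.mp hB
  obtain ⟨C, hC⟩ := hxh
  have hC0 : 0 ≤ C := (abs_nonneg _).trans (hC 0)
  refine ⟨max B (1 / δ + C / δ ^ 2), fun x ↦ ?_⟩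
  rcases lt_or_ge |x| δ with hx | hx
  · have hhx : |1 - h x| ≤ B * |x| := by
      rw [abs_sub_comm]
      exact hnear (by simpa using hx)
    calc |x * (1 - h x)| ≤ |x| * (B * |x|) := by rw [abs_mul]; gcongr
      _ = B * x ^ 2 := by rw [← sq_abs x]; ring
      _ ≤ _ := by gcongr; exact le_max_left _ _
  · have hratio : 1 ≤ |x| / δ := (one_le_div₀ hδ).mpr hx
    calc |x * (1 - h x)| = |x - x * h x| := by ring_nf
      _ ≤ |x| * 1 + C * 1 := by simpa using (abs_sub _ _).trans (add_le_add_right (hC x) _)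
      _ ≤ |x| * (|x| / δ) + C * (|x| / δ) ^ 2 := by gcongr; exact one_le_pow₀ hratio
      _ = (1 / δ + C / δ ^ 2) * x ^ 2 := by rw [← sq_abs x]; ring
      _ ≤ _ := by gcongr; exact le_max_right _ _

lemma integrable_mul_one_sub (hU : Integrable (fun x ↦ x ^ 2) U) (hmeas : Measurable h)
    (hsmall : (fun x ↦ h x - 1) =O[𝓝 0] fun x ↦ x) (hxh : ∃ C, ∀ x, |x * h x| ≤ C) :
    Integrable (fun x ↦ x * (1 - h x)) U := by
  obtain ⟨C, hC⟩ := exists_abs_mul_one_sub_le_mul_sq hsmall hxh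
  exact (hU.const_mul C).mono' (by fun_prop) (ae_of_all _ hC)

end LevyMeasure

section InversionFormula

open Set Topology
open Complex (I)

theorem statement3_general {U : Measure ℝ} (hU : Integrable (fun x ↦ x ^ 2) U) {h : ℝ → ℝ}
    (hh : Integrable (fun x ↦ x * (1 - h x)) U) (γ σ : ℝ) {a b : ℝ} (hab : a < b) :
    Tendsto
      (fun R : ℝ ↦ ∫ z in (-R)..R, (deriv (deriv (cumulantFunction U h γ σ)) z + σ ^ 2) *
        ∫ x in a..b, Complex.exp (-(I * z * x)))
      atTop
      (𝓝 (-(Real.pi * ((∫ x in Icc a b, x ^ 2 ∂U) + ∫ x in Ioo a b, x ^ 2 ∂U) : ℝ))) := by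
  have := isFiniteMeasure_secondMomentMeasure hU
  have hderiv (z : ℝ) : deriv (deriv (cumulantFunction U h γ σ)) z + σ ^ 2 =
      -charFun (secondMomentMeasure U) z := by
    rw [(hasDerivAt_deriv_cumulantFunction hU hh γ σ z).deriv]
    ring
  rw [← secondMomentMeasure_real_apply measurableSet_Icc,
    ← secondMomentMeasure_real_apply measurableSet_Ioo]
  simpa only [hderiv, neg_mul, intervalIntegral.integral_neg] using
    (tendsto_integral_charFun_mul_integral_exp (secondMomentMeasure U) hab).neg

end InversionFormula

/-- **inversion formula (2).** Assume `∫_{|x|>1} x² U(dx) < ∞` and let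
`a < b` with `U({a}) = U({b}) = 0`. Then
`∫_{[a,b]} x² U(dx) = −(1/(2π)) · v.p. ∫_ℝ (ψ''(z) + σ²) (∫_a^b e^{−izx} dx) dz`,
the principal value being the limit of integrals over `[−R, R]` as `R → ∞`. -/
theorem statement3
    (U : Measure ℝ) (hU0 : U {0} = 0)
    (hUfin : ∫⁻ x, ENNReal.ofReal (min 1 (x ^ 2)) ∂U < ⊤)
    (h : ℝ → ℝ) (hmeas : Measurable h)
    (hbdd : ∃ C, ∀ x, |h x| ≤ C)
    (hsmall : (fun x => h x - 1) =o[nhds (0 : ℝ)] fun x => x)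
    (hlarge : h =O[Filter.cocompact ℝ] fun x => x⁻¹)
    (hxh : ∃ C, ∀ x, |x * h x| ≤ C)
    (γ σ : ℝ) (hσ : 0 ≤ σ)
    (ψ : ℝ → ℂ)
    (hψ : ∀ z : ℝ, ψ z = Complex.I * (γ : ℂ) * (z : ℂ) - (σ : ℂ) ^ 2 * (z : ℂ) ^ 2 / 2 +
      ∫ x, (Complex.exp (Complex.I * (z : ℂ) * (x : ℂ)) - 1
        - Complex.I * (z : ℂ) * (x : ℂ) * (h x : ℂ)) ∂U)
    (hU2 : ∫⁻ x in {x : ℝ | 1 < |x|}, ENNReal.ofReal (x ^ 2) ∂U < ⊤)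
    (a b : ℝ) (hab : a < b) (ha : U {a} = 0) (hb : U {b} = 0) :
    ∃ L : ℂ,
      Filter.Tendsto
        (fun R : ℝ => ∫ z in (-R)..R,
          (deriv (deriv ψ) z + (σ : ℂ) ^ 2) *
            ∫ x in a..b, Complex.exp (-(Complex.I * (z : ℂ) * (x : ℂ))))
        Filter.atTop (nhds L) ∧
      ((∫ x in Set.Icc a b, x ^ 2 ∂U : ℝ) : ℂ) = -(1 / (2 * (Real.pi : ℂ))) * L := by
  have hsq := integrable_sq_of_lintegral_lt_top hUfin hU2
  have htrunc := integrable_mul_one_sub hsq hmeas hsmall.isBigO hxh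
  obtain rfl : ψ = cumulantFunction U h γ σ := funext hψ
  refine ⟨_, statement3_general hsq htrunc γ σ hab, ?_⟩
  rw [setIntegral_congr_set (Ioo_ae_eq_Icc' ha hb)]
  push_cast
  field_simp
  ring
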